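/- Let (X,Y) be a pair of random variables with X binary, and let (X₁,Y₁),(X₂,Y₂) be two independent copies. With U₁ = X₁ ⊕ X₂ and U₂ = X₂, we have H(U₁ | Y₁,Y₂) ≥ H(X|Y) ≥ H(U₂ | Y₁,Y₂,U₁). -/

import Mathlib

/-- Conditional Shannon entropy (base 2) of a joint pmf `q x y`. -/
noncomputable def condEnt {α β : Type*} [Fintype α] (q : α → β → ℝ) : ℝ :=
  ∑' y : β, ∑ x : α, -(q x y * Real.logb 2 (q x y / ∑ x' : α, q x' y))

/-!
On nonnegative vectors, let the homogeneous entropy be the total mass times the entropy of the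
normalized vector. By Gibbs' inequality it is a minimum of linear functionals, so it is homogeneous
and superadditive. Given `(Y₁, Y₂) = (y₁, y₂)`, the law of `U₁` is a mixture, with weights the law
of `X₂`, of permuted copies of the law of `X₁`, all of the same entropy: superadditivity gives the
first inequality. Likewise the laws of `X₂` restricted to the events `U₁ = u` add up to the law of
`X₂`: superadditivity gives the second one. Both are then summed over `(y₁, y₂)`.
-/

/-- The homogeneous entropy in bits of a finite nonnegative vector: the total mass `∑ x, a x` times
the Shannon entropy of the normalized vector. It is the contribution of a single value of the
conditioning variable to `condEnt`, and is `0` when all masses vanish. -/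
noncomputable def homEntropy {α : Type*} [Fintype α] (a : α → ℝ) : ℝ :=
  ∑ x, -(a x * Real.logb 2 (a x / ∑ x', a x'))

theorem condEnt_eq_tsum_homEntropy {α β : Type*} [Fintype α] (p : α → β → ℝ) :
    condEnt p = ∑' y, homEntropy fun x ↦ p x y :=
  rfl

section HomEntropy

variable {α γ : Type*} [Fintype α] [Fintype γ]

theorem homEntropy_comp_of_bijective (a : α → ℝ) {e : γ → α} (he : e.Bijective) :
    homEntropy (fun x ↦ a (e x)) = homEntropy a := by
  simp only [homEntropy, he.sum_comp a]
  exact he.sum_comp fun x ↦ -(a x * Real.logb 2 (a x / ∑ x', a x'))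

theorem homEntropy_const_mul (k : ℝ) (a : α → ℝ) :
    homEntropy (fun x ↦ k * a x) = k * homEntropy a := by
  rcases eq_or_ne k 0 with rfl | hk
  · simp [homEntropy]
  · simp only [homEntropy, ← Finset.mul_sum, mul_div_mul_left _ _ hk, mul_assoc, ← mul_neg]

theorem homEntropy_nonneg {a : α → ℝ} (ha : ∀ x, 0 ≤ a x) : 0 ≤ homEntropy a := by
  refine Finset.sum_nonneg fun x _ ↦ neg_nonneg.mpr (mul_nonpos_of_nonneg_of_nonpos (ha x) ?_)
  have hsum : 0 ≤ ∑ x', a x' := Finset.sum_nonneg fun x' _ ↦ ha x'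
  exact Real.logb_nonpos one_lt_two (div_nonneg (ha x) hsum) <|
    div_le_one_of_le₀ (Finset.single_le_sum (fun x' _ ↦ ha x') (Finset.mem_univ x)) hsum

theorem mul_log_le_mul_log_div_add {a s m : ℝ} (ha : 0 ≤ a) (hs : a ≤ s) (hm : 0 ≤ m)
    (ham : m = 0 → a = 0) :
    a * Real.log m ≤ a * Real.log (a / s) + (s * m - a) := by
  rcases ha.eq_or_lt with rfl | ha
  · simpa using mul_nonneg hs hm
  · have hs : 0 < s := ha.trans_le hs
    have hm : 0 < m := hm.lt_of_ne' fun h ↦ ha.ne' (ham h)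
    have hlog : Real.log m - Real.log (a / s) ≤ m / (a / s) - 1 := by
      rw [← Real.log_div hm.ne' (by positivity)]
      exact Real.log_le_sub_one_of_pos (by positivity)
    calc a * Real.log m
        = a * Real.log (a / s) + a * (Real.log m - Real.log (a / s)) := by ring
      _ ≤ a * Real.log (a / s) + a * (m / (a / s) - 1) := by gcongr
      _ = a * Real.log (a / s) + (s * m - a) := by field_simp

theorem homEntropy_le_crossEntropy {a m : α → ℝ} (ha : ∀ x, 0 ≤ a x) (hm : ∀ x, 0 ≤ m x)
    (hm_sum : ∑ x, m x ≤ 1) (ham : ∀ x, m x = 0 → a x = 0) :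
    homEntropy a ≤ ∑ x, -(a x * Real.logb 2 (m x)) := by
  set s := ∑ x, a x
  have has (x : α) : a x ≤ s := Finset.single_le_sum (fun x' _ ↦ ha x') (Finset.mem_univ x)
  have hlog : ∑ x, a x * Real.log (m x) ≤ ∑ x, a x * Real.log (a x / s) :=
    calc ∑ x, a x * Real.log (m x)
        ≤ ∑ x, (a x * Real.log (a x / s) + (s * m x - a x)) :=
          Finset.sum_le_sum fun x _ ↦ mul_log_le_mul_log_div_add (ha x) (has x) (hm x) (ham x)
      _ = ∑ x, a x * Real.log (a x / s) + (s * ∑ x, m x - s) := by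
          rw [Finset.sum_add_distrib, Finset.sum_sub_distrib, Finset.mul_sum]
      _ ≤ ∑ x, a x * Real.log (a x / s) := by
          have : s * ∑ x, m x ≤ s :=
            mul_le_of_le_one_right (Finset.sum_nonneg fun x _ ↦ ha x) hm_sum
          linarith
  simp only [homEntropy, Finset.sum_neg_distrib, Real.logb, ← mul_div_assoc, ← Finset.sum_div]
  gcongr

theorem homEntropy_le_logb_card_mul_sum {a : α → ℝ} (ha : ∀ x, 0 ≤ a x) :
    homEntropy a ≤ Real.logb 2 (Fintype.card α) * ∑ x, a x := by
  have hcard (x : α) : (Fintype.card α : ℝ)⁻¹ ≠ 0 :=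
    inv_ne_zero <| Nat.cast_ne_zero.mpr (Fintype.card_pos_iff.mpr ⟨x⟩).ne'
  have h := homEntropy_le_crossEntropy ha (m := fun _ ↦ (Fintype.card α : ℝ)⁻¹)
    (fun _ ↦ by positivity) (by simpa using mul_inv_le_one) fun x hx ↦ absurd hx (hcard x)
  simpa only [Real.logb_inv, mul_neg, neg_neg, ← Finset.sum_mul, mul_comm] using h

theorem sum_homEntropy_le_homEntropy_sum {a : γ → α → ℝ} (ha : ∀ i x, 0 ≤ a i x) :
    ∑ i, homEntropy (a i) ≤ homEntropy fun x ↦ ∑ i, a i x := by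
  set b : α → ℝ := fun x ↦ ∑ i, a i x with hb
  have hb0 (x : α) : 0 ≤ b x := Finset.sum_nonneg fun i _ ↦ ha i x
  have hab (i : γ) (x : α) : a i x ≤ b x :=
    Finset.single_le_sum (fun j _ ↦ ha j x) (Finset.mem_univ i)
  have hbs (x : α) : b x ≤ ∑ x', b x' :=
    Finset.single_le_sum (fun x' _ ↦ hb0 x') (Finset.mem_univ x)
  have gibbs (i : γ) :
      homEntropy (a i) ≤ ∑ x, -(a i x * Real.logb 2 (b x / ∑ x', b x')) := by
    refine homEntropy_le_crossEntropy (ha i)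
      (fun x ↦ div_nonneg (hb0 x) ((hb0 x).trans (hbs x))) ?_ fun x hx ↦ ?_
    · rw [← Finset.sum_div]
      exact div_self_le_one _
    · have hbx : b x ≤ 0 := (div_eq_zero_iff.mp hx).elim le_of_eq fun h ↦ h ▸ hbs x
      exact le_antisymm ((hab i x).trans hbx) (ha i x)
  calc ∑ i, homEntropy (a i)
      ≤ ∑ i, ∑ x, -(a i x * Real.logb 2 (b x / ∑ x', b x')) :=
        Finset.sum_le_sum fun i _ ↦ gibbs i
    _ = homEntropy b := by
        rw [Finset.sum_comm]
        simp only [homEntropy, hb, Finset.sum_neg_distrib, Finset.sum_mul]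

end HomEntropy

section PermutedMixture

variable {α γ : Type*} [Fintype α] [Fintype γ] {τ : α → γ → α}

theorem sum_sum_mul_of_bijective (hτ : ∀ x, Function.Bijective (τ · x)) (a : α → ℝ) (b : γ → ℝ) :
    ∑ u, ∑ x, a (τ u x) * b x = (∑ u, a u) * ∑ x, b x := by
  rw [Finset.sum_comm, Finset.mul_sum]
  exact Finset.sum_congr rfl fun x _ ↦ by rw [← Finset.sum_mul, (hτ x).sum_comp a]

variable {a : α → ℝ} {b : γ → ℝ}

theorem homEntropy_mul_sum_le_homEntropy_mixture (hτ : ∀ x, Function.Bijective (τ · x))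
    (ha : ∀ u, 0 ≤ a u) (hb : ∀ x, 0 ≤ b x) :
    homEntropy a * ∑ x, b x ≤ homEntropy fun u ↦ ∑ x, a (τ u x) * b x :=
  calc homEntropy a * ∑ x, b x
      = ∑ x, homEntropy fun u ↦ a (τ u x) * b x := by
        rw [Finset.mul_sum]
        refine Finset.sum_congr rfl fun x _ ↦ ?_
        simp only [mul_comm _ (b x)]
        rw [homEntropy_const_mul, homEntropy_comp_of_bijective a (hτ x)]
    _ ≤ homEntropy fun u ↦ ∑ x, a (τ u x) * b x :=
        sum_homEntropy_le_homEntropy_sum fun x u ↦ mul_nonneg (ha (τ u x)) (hb x)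

theorem sum_homEntropy_mul_le_sum_mul_homEntropy (hτ : ∀ x, Function.Bijective (τ · x))
    (ha : ∀ u, 0 ≤ a u) (hb : ∀ x, 0 ≤ b x) :
    ∑ u, homEntropy (fun x ↦ a (τ u x) * b x) ≤ (∑ u, a u) * homEntropy b :=
  calc ∑ u, homEntropy (fun x ↦ a (τ u x) * b x)
      ≤ homEntropy fun x ↦ ∑ u, a (τ u x) * b x :=
        sum_homEntropy_le_homEntropy_sum fun u x ↦ mul_nonneg (ha (τ u x)) (hb x)
    _ = (∑ u, a u) * homEntropy b := by
        simp only [← Finset.sum_mul, fun x ↦ (hτ x).sum_comp a, homEntropy_const_mul]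

end PermutedMixture

section CondEnt

variable {α β γ δ : Type*} [Fintype α] [Fintype γ]

theorem hasSum_marginal {p : α → β → ℝ} {s : ℝ} (hp : HasSum (fun z : α × β ↦ p z.1 z.2) s) :
    HasSum (fun y ↦ ∑ x, p x y) s :=
  ((Equiv.prodComm β α).hasSum_iff.mpr hp).prod_fiberwise fun _ ↦ hasSum_fintype _

theorem summable_homEntropy {p : α → β → ℝ} (hp : ∀ x y, 0 ≤ p x y)
    (hp_sum : Summable fun y ↦ ∑ x, p x y) : Summable fun y ↦ homEntropy fun x ↦ p x y :=
  (hp_sum.mul_left _).of_nonneg_of_le (fun y ↦ homEntropy_nonneg (hp · y))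
    fun y ↦ homEntropy_le_logb_card_mul_sum (hp · y)

theorem summable_mul_prod {f : β → ℝ} {g : δ → ℝ} (hf : Summable f) (hg : Summable g) :
    Summable fun y : β × δ ↦ f y.1 * g y.2 :=
  summable_mul_of_summable_norm hf.norm hg.norm

theorem tsum_prod_le_tsum_of_sum_le {f : β × α → ℝ} {g : β → ℝ} (hf : ∀ z, 0 ≤ f z)
    (hg : Summable g) (hfg : ∀ y, ∑ u, f (y, u) ≤ g y) : ∑' z, f z ≤ ∑' y, g y := by
  have hfiber : Summable fun y ↦ ∑' u, f (y, u) := by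
    simp only [tsum_fintype]
    exact hg.of_nonneg_of_le (fun y ↦ Finset.sum_nonneg fun u _ ↦ hf (y, u)) hfg
  have hf_sum : Summable f :=
    (summable_prod_of_nonneg hf).mpr ⟨fun _ ↦ (hasSum_fintype _).summable, hfiber⟩
  rw [hf_sum.tsum_prod]
  exact hfiber.tsum_le_tsum (fun y ↦ (tsum_fintype _).trans_le (hfg y)) hg

variable {τ : α → γ → α} {p : α → β → ℝ} {q : γ → δ → ℝ}

theorem condEnt_le_condEnt_mixture (hτ : ∀ x, Function.Bijective (τ · x))
    (hp : ∀ u y, 0 ≤ p u y) (hq : ∀ x y, 0 ≤ q x y) (hp_sum : Summable fun y ↦ ∑ u, p u y)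
    (hq_sum : HasSum (fun y ↦ ∑ x, q x y) 1) :
    condEnt p ≤ condEnt fun u (y : β × δ) ↦ ∑ x, p (τ u x) y.1 * q x y.2 := by
  have hp_ent := summable_homEntropy hp hp_sum
  have hmix (u : α) (y : β × δ) : 0 ≤ ∑ x, p (τ u x) y.1 * q x y.2 :=
    Finset.sum_nonneg fun x _ ↦ mul_nonneg (hp _ _) (hq _ _)
  have hmix_sum : Summable fun y : β × δ ↦ ∑ u, ∑ x, p (τ u x) y.1 * q x y.2 :=
    (summable_mul_prod hp_sum hq_sum.summable).congr fun y ↦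
      (sum_sum_mul_of_bijective hτ (p · y.1) (q · y.2)).symm
  have hprod := summable_mul_prod hp_ent hq_sum.summable
  calc condEnt p
      = ∑' y : β × δ, (homEntropy fun u ↦ p u y.1) * ∑ x, q x y.2 := by
        rw [← hp_ent.tsum_mul_tsum hq_sum.summable hprod, hq_sum.tsum_eq, mul_one,
          condEnt_eq_tsum_homEntropy]
    _ ≤ condEnt fun u (y : β × δ) ↦ ∑ x, p (τ u x) y.1 * q x y.2 :=
        hprod.tsum_le_tsum
          (fun y ↦ homEntropy_mul_sum_le_homEntropy_mixture hτ (hp · y.1) (hq · y.2))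
          (summable_homEntropy hmix hmix_sum)

theorem condEnt_mul_le_condEnt (hτ : ∀ x, Function.Bijective (τ · x))
    (hp : ∀ u y, 0 ≤ p u y) (hq : ∀ x y, 0 ≤ q x y) (hp_sum : HasSum (fun y ↦ ∑ u, p u y) 1)
    (hq_sum : Summable fun y ↦ ∑ x, q x y) :
    (condEnt fun x (w : β × δ × α) ↦ p (τ w.2.2 x) w.1 * q x w.2.1) ≤ condEnt q := by
  have hq_ent := summable_homEntropy hq hq_sum
  have hprod := summable_mul_prod hp_sum.summable hq_ent
  calc (condEnt fun x (w : β × δ × α) ↦ p (τ w.2.2 x) w.1 * q x w.2.1)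
      = ∑' z : (β × δ) × α, homEntropy fun x ↦ p (τ z.2 x) z.1.1 * q x z.1.2 := by
        rw [condEnt_eq_tsum_homEntropy, ← (Equiv.prodAssoc β δ α).tsum_eq]
        rfl
    _ ≤ ∑' y : β × δ, (∑ u, p u y.1) * homEntropy fun x ↦ q x y.2 :=
        tsum_prod_le_tsum_of_sum_le
          (fun z ↦ homEntropy_nonneg fun x ↦ mul_nonneg (hp _ _) (hq _ _)) hprod
          fun y ↦ sum_homEntropy_mul_le_sum_mul_homEntropy hτ (hp · y.1) (hq · y.2)
    _ = condEnt q := by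
        rw [← hp_sum.summable.tsum_mul_tsum hq_ent hprod, hp_sum.tsum_eq, one_mul,
          condEnt_eq_tsum_homEntropy]

end CondEnt

/-- Here `(X₁, Y₁)` and `(X₂, Y₂)` are independent with laws `p` and `q`, and `U₁` is defined by
`X₁ = τ U₁ X₂`; for bits, `X₁ = U₁ ⊕ X₂` is equivalent to `U₁ = X₁ ⊕ X₂`. -/
theorem stmt1_general {α β γ δ : Type*} [Fintype α] [Fintype γ] {τ : α → γ → α}
    (hτ : ∀ x, Function.Bijective (τ · x)) {p : α → β → ℝ} {q : γ → δ → ℝ}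
    (hp : ∀ u y, 0 ≤ p u y) (hq : ∀ x y, 0 ≤ q x y)
    (hp_sum : HasSum (fun z : α × β ↦ p z.1 z.2) 1)
    (hq_sum : HasSum (fun z : γ × δ ↦ q z.1 z.2) 1) :
    (condEnt fun u (y : β × δ) ↦ ∑ x, p (τ u x) y.1 * q x y.2) ≥ condEnt p ∧
      condEnt q ≥ condEnt fun x (w : β × δ × α) ↦ p (τ w.2.2 x) w.1 * q x w.2.1 :=
  ⟨condEnt_le_condEnt_mixture hτ hp hq (hasSum_marginal hp_sum).summable (hasSum_marginal hq_sum),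
    condEnt_mul_le_condEnt hτ hp hq (hasSum_marginal hp_sum) (hasSum_marginal hq_sum).summable⟩

/-- Entropy polarization of the basic 2×2 transform:
`H(U₁ | Y₁,Y₂) ≥ H(X|Y) ≥ H(U₂ | Y₁,Y₂,U₁)` where `U₁ = X₁ ⊕ X₂`, `U₂ = X₂`. -/
theorem stmt1 (p : Bool → ℕ → ℝ) (hp : ∀ x y, 0 ≤ p x y)
    (hsum : HasSum (fun z : Bool × ℕ => p z.1 z.2) 1) :
    condEnt (fun (u₁ : Bool) (y : ℕ × ℕ) =>
        ∑ x₂ : Bool, p (xor u₁ x₂) y.1 * p x₂ y.2) ≥ condEnt p ∧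
    condEnt p ≥ condEnt (fun (u₂ : Bool) (w : ℕ × ℕ × Bool) =>
        p (xor w.2.2 u₂) w.1 * p u₂ w.2.1) :=
  stmt1_general (fun x ↦ Function.Involutive.bijective fun u ↦ by simp) hp hp hsum hsum
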